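/- If each A_k is nonzero and the cyclic BCPG stepsize parameters are chosen as P_k = L_k = λ_max(A_k^T A_k) for every k, then for all r ≥ 0 the iterates satisfy Δ^{(r+1)} := f(x^{(r+1)}) − f* ≤ 3 · max{ Δ^{(0)}, 2 log²(2NK) · (L_max + L²/L_min) · R_0² } / (r+1). -/

import Mathlib

open Finset

/-- Squared Euclidean norm of a vector in `ℝ^n`. -/
noncomputable def sqnorm {n : ℕ} (v : Fin n → ℝ) : ℝ := ∑ i, v i ^ 2

/-- Euclidean inner product on `ℝ^n`. -/
noncomputable def dotp {n : ℕ} (u v : Fin n → ℝ) : ℝ := ∑ i, u i * v i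

/-- `λ_max(AᵀA)` for a real matrix `A`, characterized as the maximum of `‖Av‖²`
over unit vectors `v`. -/
noncomputable def lamMaxQ {M N : ℕ} (A : Matrix (Fin M) (Fin N) ℝ) : ℝ :=
  sSup {r : ℝ | ∃ v : Fin N → ℝ, sqnorm v = 1 ∧ r = sqnorm (A.mulVec v)}

/-- `λ_min(AᵀA)` for a real matrix `A`, characterized as the minimum of `‖Av‖²`
over unit vectors `v`. -/
noncomputable def lamMinQ {M N : ℕ} (A : Matrix (Fin M) (Fin N) ℝ) : ℝ :=
  sInf {r : ℝ | ∃ v : Fin N → ℝ, sqnorm v = 1 ∧ r = sqnorm (A.mulVec v)}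

/-- `λ_max(AᵀA)` for the concatenated matrix `A = [A_1 ⋯ A_K]`, acting on block
vectors. -/
noncomputable def lamMaxBlock {K M N : ℕ} (A : Fin K → Matrix (Fin M) (Fin N) ℝ) : ℝ :=
  sSup {r : ℝ | ∃ v : Fin K → Fin N → ℝ, (∑ k, sqnorm (v k)) = 1 ∧
    r = sqnorm (∑ k, (A k).mulVec (v k))}

/-- Maximum of a finite family of reals indexed by `Fin K`, `K ≥ 1`. -/
noncomputable def maxOf {K : ℕ} (hK : 1 ≤ K) (P : Fin K → ℝ) : ℝ :=
  Finset.univ.sup' (Finset.univ_nonempty_iff.mpr ⟨⟨0, hK⟩⟩) P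

/-- Minimum of a finite family of reals indexed by `Fin K`, `K ≥ 1`. -/
noncomputable def minOf {K : ℕ} (hK : 1 ≤ K) (P : Fin K → ℝ) : ℝ :=
  Finset.univ.inf' (Finset.univ_nonempty_iff.mpr ⟨⟨0, hK⟩⟩) P

/-- The residual `Σ_k A_k x_k − b`. -/
noncomputable def resid {K M N : ℕ} (A : Fin K → Matrix (Fin M) (Fin N) ℝ)
    (b : Fin M → ℝ) (x : Fin K → Fin N → ℝ) : Fin M → ℝ :=
  (∑ k, (A k).mulVec (x k)) - b

/-- The smooth part `g(x) = (1/2)‖Σ_k A_k x_k − b‖²`. -/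
noncomputable def gq {K M N : ℕ} (A : Fin K → Matrix (Fin M) (Fin N) ℝ)
    (b : Fin M → ℝ) (x : Fin K → Fin N → ℝ) : ℝ :=
  (1 / 2) * sqnorm (resid A b x)

/-- The objective `f(x) = g(x) + Σ_k h_k(x_k)`. -/
noncomputable def fq {K M N : ℕ} (A : Fin K → Matrix (Fin M) (Fin N) ℝ)
    (b : Fin M → ℝ) (h : Fin K → (Fin N → ℝ) → ℝ) (x : Fin K → Fin N → ℝ) : ℝ :=
  gq A b x + ∑ k, h k (x k)

/-- The partial gradient `∇_k g(x) = A_kᵀ (Σ_j A_j x_j − b)`. -/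
noncomputable def gradk {K M N : ℕ} (A : Fin K → Matrix (Fin M) (Fin N) ℝ)
    (b : Fin M → ℝ) (x : Fin K → Fin N → ℝ) (k : Fin K) : Fin N → ℝ :=
  ((A k).transpose).mulVec (resid A b x)

/-- The intermediate point `w_k^{(r+1)}` of the cycle: blocks `j < k` come from
`x^{(r+1)} = xp`, the remaining blocks from `x^{(r)} = x`. -/
def wpt {K N : ℕ} (x xp : Fin K → Fin N → ℝ) (k : Fin K) : Fin K → Fin N → ℝ :=
  fun j => if j < k then xp j else x j

/-- The objective of the `k`-th BCPG prox subproblem at the point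
`w_k^{(r+1)} = wpt x xp k`, evaluated at candidate block `y`. -/
noncomputable def bcpgObj {K M N : ℕ} (A : Fin K → Matrix (Fin M) (Fin N) ℝ)
    (b : Fin M → ℝ) (h : Fin K → (Fin N → ℝ) → ℝ) (P : Fin K → ℝ)
    (x xp : Fin K → Fin N → ℝ) (k : Fin K) (y : Fin N → ℝ) : ℝ :=
  dotp (gradk A b (wpt x xp k) k) (y - x k) + (P k / 2) * sqnorm (y - x k) + h k y

/-- One cycle of cyclic BCPG: `xp = x^{(r+1)}` is obtained from `x = x^{(r)}`
by letting, for `k = 1,…,K`, the `k`-th block minimize the prox subproblem at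
`w_k^{(r+1)}` over `X_k`. -/
def BCPGStep {K M N : ℕ} (A : Fin K → Matrix (Fin M) (Fin N) ℝ)
    (b : Fin M → ℝ) (h : Fin K → (Fin N → ℝ) → ℝ)
    (X : Fin K → Set (Fin N → ℝ)) (P : Fin K → ℝ)
    (x xp : Fin K → Fin N → ℝ) : Prop :=
  ∀ k : Fin K, xp k ∈ X k ∧ ∀ y ∈ X k,
    bcpgObj A b h P x xp k (xp k) ≤ bcpgObj A b h P x xp k y

/-- One cycle of cyclic exact BCD: `xp = x^{(r+1)}` is obtained from
`x = x^{(r)}` by letting, for `k = 1,…,K`, the `k`-th block minimize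
`f(x_1^{(r+1)},…,x_{k−1}^{(r+1)}, ·, x_{k+1}^{(r)},…,x_K^{(r)})` over `X_k`. -/
def BCDStep {K M N : ℕ} (A : Fin K → Matrix (Fin M) (Fin N) ℝ)
    (b : Fin M → ℝ) (h : Fin K → (Fin N → ℝ) → ℝ)
    (X : Fin K → Set (Fin N → ℝ))
    (x xp : Fin K → Fin N → ℝ) : Prop :=
  ∀ k : Fin K, xp k ∈ X k ∧ ∀ y ∈ X k,
    fq A b h (Function.update (wpt x xp k) k (xp k)) ≤
      fq A b h (Function.update (wpt x xp k) k y)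


lemma sqnorm_eq_dot {n : ℕ} (v : Fin n → ℝ) : sqnorm v = v ⬝ᵥ v := by
  simp [sqnorm, dotProduct, pow_two]

lemma dotp_eq_dot {n : ℕ} (u v : Fin n → ℝ) : dotp u v = u ⬝ᵥ v := rfl

lemma sqnorm_nonneg' {n : ℕ} (v : Fin n → ℝ) : 0 ≤ sqnorm v :=
  Finset.sum_nonneg fun _ _ => sq_nonneg _

lemma sqnorm_smul' {n : ℕ} (t : ℝ) (v : Fin n → ℝ) : sqnorm (t • v) = t ^ 2 * sqnorm v := by
  simp [sqnorm, mul_pow, Finset.mul_sum]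

lemma sqnorm_eq_zero' {n : ℕ} (v : Fin n → ℝ) (h : sqnorm v = 0) : v = 0 := by
  rw [sqnorm_eq_dot] at h
  exact dotProduct_self_eq_zero.mp h

lemma block_bound {K M N : ℕ} (A : Fin K → Matrix (Fin M) (Fin N) ℝ)
    (v : Fin K → Fin N → ℝ) :
    sqnorm (∑ k, (A k).mulVec (v k)) ≤
      (∑ i, ∑ k, ∑ j, A k i j ^ 2) * ∑ k, sqnorm (v k) := by
  unfold sqnorm
  rw [Finset.sum_mul]
  refine Finset.sum_le_sum fun i _ => ?_
  have := Finset.sum_mul_sq_le_sq_mul_sq (Finset.univ : Finset (Fin K × Fin N))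
    (fun q => A q.1 i q.2) (fun q => v q.1 q.2)
  simp only [Fintype.sum_prod_type] at this
  simpa [Finset.sum_apply, Matrix.mulVec, dotProduct] using this

lemma block_le {K M N : ℕ} (A : Fin K → Matrix (Fin M) (Fin N) ℝ)
    (v : Fin K → Fin N → ℝ) :
    sqnorm (∑ k, (A k).mulVec (v k)) ≤ lamMaxBlock A * ∑ k, sqnorm (v k) := by
  set S := ∑ k, sqnorm (v k) with hS
  have hS0 : 0 ≤ S := Finset.sum_nonneg fun _ _ => sqnorm_nonneg' _
  rcases hS0.eq_or_lt with h0 | hpos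
  · have := block_bound A v
    rw [← hS, ← h0] at this
    rw [← h0]; simpa using this
  · have hbd : BddAbove {r : ℝ | ∃ v : Fin K → Fin N → ℝ, (∑ k, sqnorm (v k)) = 1 ∧
        r = sqnorm (∑ k, (A k).mulVec (v k))} := by
      refine ⟨∑ i, ∑ k, ∑ j, A k i j ^ 2, ?_⟩
      rintro r ⟨w, hw, rfl⟩
      have := block_bound A w
      rwa [hw, mul_one] at this
    have hs : (Real.sqrt S)⁻¹ ^ 2 = S⁻¹ := by rw [inv_pow, Real.sq_sqrt hS0]
    have : S⁻¹ * sqnorm (∑ k, (A k).mulVec (v k)) ≤ lamMaxBlock A := by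
      refine le_csSup hbd ⟨fun k => (Real.sqrt S)⁻¹ • v k, ?_, ?_⟩
      · simp only [sqnorm_smul', hs, ← Finset.mul_sum]
        rw [← hS]; exact inv_mul_cancel₀ hpos.ne'
      · simp only [Matrix.mulVec_smul, ← Finset.smul_sum, sqnorm_smul', hs]
    rw [inv_mul_le_iff₀ hpos] at this
    linarith

lemma lamMaxQ_eq {M N : ℕ} (A : Matrix (Fin M) (Fin N) ℝ) :
    lamMaxQ A = lamMaxBlock (K := 1) (fun _ => A) := by
  unfold lamMaxQ lamMaxBlock
  congr 1
  ext r
  constructor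
  · rintro ⟨v, h1, h2⟩
    exact ⟨fun _ => v, by simpa using h1, by simpa using h2⟩
  · rintro ⟨v, h1, h2⟩
    exact ⟨v 0, by simpa using h1, by simpa using h2⟩

lemma lamMaxQ_le {M N : ℕ} (A : Matrix (Fin M) (Fin N) ℝ) (v : Fin N → ℝ) :
    sqnorm (A.mulVec v) ≤ lamMaxQ A * sqnorm v := by
  have := block_le (K := 1) (fun _ => A) (fun _ => v)
  rw [← lamMaxQ_eq] at this
  simpa using this

lemma lamMaxBlock_nonneg {K M N : ℕ} (A : Fin K → Matrix (Fin M) (Fin N) ℝ) :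
    0 ≤ lamMaxBlock A := by
  apply Real.sSup_nonneg
  rintro r ⟨v, _, rfl⟩
  exact sqnorm_nonneg' _

lemma lamMaxQ_pos {M N : ℕ} (A : Matrix (Fin M) (Fin N) ℝ) (hA : A ≠ 0) :
    0 < lamMaxQ A := by
  have h0 : 0 ≤ lamMaxQ A := by rw [lamMaxQ_eq]; exact lamMaxBlock_nonneg _
  rcases h0.eq_or_lt with h | h
  · exfalso
    apply hA
    have hz : ∀ v, A.mulVec v = 0 := fun v => by
      apply sqnorm_eq_zero'
      have := lamMaxQ_le A v
      rw [← h, zero_mul] at this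
      exact le_antisymm this (sqnorm_nonneg' _)
    ext i j
    have := congrFun (hz (Pi.single j 1)) i
    simpa using this
  · exact h

/-- two-by-two estimate -/
lemma two_by_two {t t' u1 u2 v1 v2 : ℝ} (ht' : 1 ≤ t') (htt : t ^ 2 ≤ t' ^ 2 - t') :
    t * (u1 * v1) + t * (u2 * v2) + u1 * v2 ≤
      t' * (Real.sqrt (u1 ^ 2 + u2 ^ 2) * Real.sqrt (v1 ^ 2 + v2 ^ 2)) := by
  have h1 : (t * (u1 * v1) + t * (u2 * v2) + u1 * v2) ^ 2 ≤
      (t' * (Real.sqrt (u1 ^ 2 + u2 ^ 2) * Real.sqrt (v1 ^ 2 + v2 ^ 2))) ^ 2 := by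
    rw [mul_pow, mul_pow, Real.sq_sqrt (by positivity), Real.sq_sqrt (by positivity)]
    have e1 : (t * (u1 * v1) + t * (u2 * v2) + u1 * v2) ^ 2 ≤
        (u1 ^ 2 + u2 ^ 2) * ((t * v1 + v2) ^ 2 + (t * v2) ^ 2) := by
      nlinarith [sq_nonneg (u1 * (t * v2) - u2 * (t * v1 + v2))]
    have e2 : 0 ≤ t' * (t' * v1 ^ 2 - 2 * t * v1 * v2 + (t' - 1) * v2 ^ 2) := by
      nlinarith [sq_nonneg (t' * v1 - t * v2), mul_nonneg (sub_nonneg.2 htt) (sq_nonneg v2)]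
    have e3 : 0 ≤ t' * v1 ^ 2 - 2 * t * v1 * v2 + (t' - 1) * v2 ^ 2 :=
      nonneg_of_mul_nonneg_right e2 (by linarith)
    have e4 : (t * v1 + v2) ^ 2 + (t * v2) ^ 2 ≤ t' ^ 2 * (v1 ^ 2 + v2 ^ 2) := by
      nlinarith [mul_nonneg (sub_nonneg.2 htt) (sq_nonneg v2),
        mul_nonneg (sub_nonneg.2 htt) (sq_nonneg v1)]
    calc _ ≤ _ := e1
      _ ≤ (u1 ^ 2 + u2 ^ 2) * (t' ^ 2 * (v1 ^ 2 + v2 ^ 2)) :=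
        mul_le_mul_of_nonneg_left e4 (by positivity)
      _ = _ := by ring
  exact le_trans (le_abs_self _) (abs_le_of_sq_le_sq h1 (by positivity))

lemma dot_le_sqrt {n : ℕ} (u v : Fin n → ℝ) :
    u ⬝ᵥ v ≤ Real.sqrt (sqnorm u) * Real.sqrt (sqnorm v) := by
  have := Finset.sum_mul_sq_le_sq_mul_sq Finset.univ u v
  rw [← Real.sqrt_mul (sqnorm_nonneg' u)]
  exact Real.le_sqrt_of_sq_le this

def Iblk (K s p : ℕ) : Finset (Fin K) :=
  Finset.univ.filter fun k => s ≤ k.val ∧ k.val < s + 2 ^ p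

lemma Iblk_succ (K s p : ℕ) : Iblk K s (p + 1) = Iblk K s p ∪ Iblk K (s + 2 ^ p) p := by
  ext k
  have : 0 < 2 ^ p := by positivity
  simp only [Iblk, Finset.mem_filter, Finset.mem_univ, true_and, Finset.mem_union, pow_succ]
  omega

lemma Iblk_disj (K s p : ℕ) : Disjoint (Iblk K s p) (Iblk K (s + 2 ^ p) p) := by
  rw [Finset.disjoint_left]
  intro k
  simp only [Iblk, Finset.mem_filter, Finset.mem_univ, true_and]
  omega

lemma trunc {K M : ℕ} (a c : Fin K → Fin M → ℝ) (U V : Fin K → ℝ)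
    (hU : ∀ k, 0 ≤ U k) (hV : ∀ k, 0 ≤ V k) (α β : ℝ) (hα : 0 ≤ α) (hβ : 0 ≤ β)
    (ha : ∀ S : Finset (Fin K), sqnorm (∑ k ∈ S, a k) ≤ α ^ 2 * ∑ k ∈ S, U k)
    (hc : ∀ S : Finset (Fin K), sqnorm (∑ k ∈ S, c k) ≤ β ^ 2 * ∑ k ∈ S, V k)
    (p : ℕ) : ∀ s : ℕ,
    (∑ k ∈ Iblk K s p, ∑ j ∈ Iblk K s p, if k < j then a k ⬝ᵥ c j else 0) ≤
      (α * β) * ((3 / 8 + 3 / 4 * (p : ℝ)) *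
        (Real.sqrt (∑ k ∈ Iblk K s p, U k) * Real.sqrt (∑ k ∈ Iblk K s p, V k))) := by
  induction p with
  | zero =>
    intro s
    have : (∑ k ∈ Iblk K s 0, ∑ j ∈ Iblk K s 0, if k < j then a k ⬝ᵥ c j else 0) = 0 := by
      refine Finset.sum_eq_zero fun k hk => Finset.sum_eq_zero fun j hj => ?_
      simp only [Iblk, Finset.mem_filter, Finset.mem_univ, true_and, pow_zero] at hk hj
      rw [if_neg]
      rw [Fin.lt_def]; omega
    rw [this]
    positivity
  | succ p ih =>
    intro s
    rw [Iblk_succ]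
    have hd := Iblk_disj K s p
    have h1 := ih s
    have h2 := ih (s + 2 ^ p)
    set S := Iblk K s p with hS
    set T := Iblk K (s + 2 ^ p) p with hT
    have hST : ∀ k ∈ S, ∀ j ∈ T, k < j := by
      intro k hk j hj
      simp only [hS, hT, Iblk, Finset.mem_filter, Finset.mem_univ, true_and] at hk hj
      rw [Fin.lt_def]; omega
    have hcross : (∑ k ∈ S, ∑ j ∈ T, if k < j then a k ⬝ᵥ c j else 0) =
        (∑ k ∈ S, a k) ⬝ᵥ (∑ j ∈ T, c j) := by
      rw [sum_dotProduct]
      refine Finset.sum_congr rfl fun k hk => ?_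
      rw [dotProduct_sum]
      exact Finset.sum_congr rfl fun j hj => if_pos (hST k hk j hj)
    have hcross2 : (∑ k ∈ T, ∑ j ∈ S, if k < j then a k ⬝ᵥ c j else 0) = 0 :=
      Finset.sum_eq_zero fun k hk => Finset.sum_eq_zero fun j hj =>
        if_neg (not_lt.2 (hST j hj k hk).le)
    have hcr : (∑ k ∈ S, a k) ⬝ᵥ (∑ j ∈ T, c j) ≤
        (α * β) * (Real.sqrt (∑ k ∈ S, U k) * Real.sqrt (∑ k ∈ T, V k)) := by
      refine (dot_le_sqrt _ _).trans ?_
      have e1 : Real.sqrt (sqnorm (∑ k ∈ S, a k)) ≤ α * Real.sqrt (∑ k ∈ S, U k) := by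
        refine (Real.sqrt_le_sqrt (ha S)).trans ?_
        rw [Real.sqrt_mul (sq_nonneg α), Real.sqrt_sq hα]
      have e2 : Real.sqrt (sqnorm (∑ k ∈ T, c k)) ≤ β * Real.sqrt (∑ k ∈ T, V k) := by
        refine (Real.sqrt_le_sqrt (hc T)).trans ?_
        rw [Real.sqrt_mul (sq_nonneg β), Real.sqrt_sq hβ]
      calc _ ≤ (α * Real.sqrt (∑ k ∈ S, U k)) * (β * Real.sqrt (∑ k ∈ T, V k)) :=
            mul_le_mul e1 e2 (Real.sqrt_nonneg _) (by positivity)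
        _ = _ := by ring
    rw [Finset.sum_union hd, Finset.sum_union hd, Finset.sum_union hd]
    simp only [Finset.sum_union hd, Finset.sum_add_distrib]
    rw [hcross, hcross2]
    have hUS : 0 ≤ ∑ k ∈ S, U k := Finset.sum_nonneg fun k _ => hU k
    have hUT : 0 ≤ ∑ k ∈ T, U k := Finset.sum_nonneg fun k _ => hU k
    have hVS : 0 ≤ ∑ k ∈ S, V k := Finset.sum_nonneg fun k _ => hV k
    have hVT : 0 ≤ ∑ k ∈ T, V k := Finset.sum_nonneg fun k _ => hV k
    have key := two_by_two (t := 3 / 8 + 3 / 4 * (p : ℝ)) (t' := 3 / 8 + 3 / 4 * ((p + 1 : ℕ) : ℝ))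
      (u1 := Real.sqrt (∑ k ∈ S, U k)) (u2 := Real.sqrt (∑ k ∈ T, U k))
      (v1 := Real.sqrt (∑ k ∈ S, V k)) (v2 := Real.sqrt (∑ k ∈ T, V k))
      (by push_cast; nlinarith [(Nat.cast_nonneg p : (0:ℝ) ≤ p)])
      (by push_cast; nlinarith [(Nat.cast_nonneg p : (0:ℝ) ≤ p)])
    rw [Real.sq_sqrt hUS, Real.sq_sqrt hUT, Real.sq_sqrt hVS, Real.sq_sqrt hVT] at key
    have key2 := mul_le_mul_of_nonneg_left key (mul_nonneg hα hβ)
    linarith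

lemma recursion (D : ℕ → ℝ) (C : ℝ) (hD : ∀ r, 0 ≤ D r) (h0 : D 0 ≤ C)
    (hm : ∀ r, D (r + 1) ≤ D r)
    (hs : ∀ r, D (r + 1) ^ 2 ≤ 2 * C * (D r - D (r + 1))) (r : ℕ) :
    D (r + 1) ≤ 3 * C / (r + 1) := by
  have hC : 0 ≤ C := (hD 0).trans h0
  induction r with
  | zero => have := hm 0; simp; linarith
  | succ r ih =>
    rcases Nat.eq_zero_or_pos r with rfl | hr
    · have h1 := hm 0
      have h2 := hm 1
      norm_num at *
      linarith
    · have hr' : (1 : ℝ) ≤ r := by exact_mod_cast hr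
      by_contra hcon
      push Not at hcon
      push_cast at hcon
      set q := 3 * C / ((r : ℝ) + 1 + 1) with hq
      have hq0 : 0 ≤ q := by positivity
      have hqq : 2 * C * (3 * C / ((r : ℝ) + 1)) ≤ q ^ 2 + 2 * C * q := by
        have : q ^ 2 + 2 * C * q - 2 * C * (3 * C / ((r : ℝ) + 1)) =
            3 * C ^ 2 * (r - 1) / (((r : ℝ) + 1 + 1) ^ 2 * (r + 1)) := by
          rw [hq]; field_simp; ring
        have h2 : 0 ≤ 3 * C ^ 2 * ((r : ℝ) - 1) / (((r : ℝ) + 1 + 1) ^ 2 * (r + 1)) := by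
          apply div_nonneg _ (by positivity)
          exact mul_nonneg (by positivity) (by linarith)
        linarith
      have := hs (r + 1)
      have h3 := mul_le_mul_of_nonneg_left ih (by linarith : 0 ≤ 2 * C)
      have h4 := mul_le_mul_of_nonneg_left hcon.le (by linarith : 0 ≤ 2 * C)
      nlinarith

lemma log_bound {K N : ℕ} (hK : 1 ≤ K) (hN : 1 ≤ N) (hNK : 3 ≤ N * K) :
    ∃ p : ℕ, K ≤ 2 ^ p ∧ (3 / 8 + 3 / 4 * (p : ℝ)) ^ 2 + 1 ≤
      2 * Real.log (2 * (N : ℝ) * (K : ℝ)) ^ 2 := by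
  refine ⟨Nat.clog 2 K, Nat.le_pow_clog (by norm_num) K, ?_⟩
  set p := Nat.clog 2 K with hp
  have h2p : 2 ^ p ≤ 2 * K := by
    rcases hK.eq_or_lt with h | h
    · rw [hp, ← h]; simp
    · have := Nat.pow_pred_clog_lt_self (b := 2) (by norm_num) h
      have hp0 : 0 < p := Nat.clog_pos (by norm_num) h
      obtain ⟨q, hq⟩ : ∃ q, p = q + 1 := ⟨p - 1, by omega⟩
      rw [← hp, hq] at this
      simp at this
      rw [hq, pow_succ]; omega
  set l := Real.log (2 * (N : ℝ) * (K : ℝ)) with hl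
  have hNKr : (3 : ℝ) ≤ N * K := by exact_mod_cast hNK
  have hle1 : (p : ℝ) * Real.log 2 ≤ l := by
    rw [← Real.log_pow]
    apply Real.log_le_log (by positivity)
    have h1 : ((2 : ℝ) ^ p) ≤ 2 * K := by exact_mod_cast h2p
    have h2 : (1 : ℝ) ≤ N := by exact_mod_cast hN
    have h3 : (1 : ℝ) ≤ K := by exact_mod_cast hK
    nlinarith
  have hle2 : 31 * Real.log 2 ≤ 12 * l := by
    have h6 : Real.log 6 ≤ l := Real.log_le_log (by norm_num) (by nlinarith)
    have : 31 * Real.log 2 ≤ 12 * Real.log 6 := by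
      have e1 := Real.log_pow (x := (2 : ℝ)) (n := 31)
      have e2 := Real.log_pow (x := (6 : ℝ)) (n := 12)
      have e3 : Real.log ((2 : ℝ) ^ 31) ≤ Real.log ((6 : ℝ) ^ 12) :=
        Real.log_le_log (by norm_num) (by norm_num)
      rw [e1, e2] at e3
      exact_mod_cast e3
    linarith
  have hlog := Real.log_two_gt_d9
  have hp0 : (0 : ℝ) ≤ p := Nat.cast_nonneg p
  have hl1 : (1.79 : ℝ) ≤ l := by linarith
  have hp1 : (p : ℝ) ≤ 1.4428 * l := by nlinarith
  have hp2 : 3 / 8 + 3 / 4 * (p : ℝ) ≤ 3 / 8 + 1.0821 * l := by linarith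
  have := pow_le_pow_left₀ (by positivity) hp2 2
  nlinarith

lemma sum_split_lt {K : ℕ} (F : Fin K → Fin K → ℝ) :
    ∑ k, ∑ j, F k j = ∑ k, F k k + ∑ k, ∑ j, (if j < k then F k j else 0)
      + ∑ k, ∑ j, (if k < j then F k j else 0) := by
  rw [← Finset.sum_add_distrib, ← Finset.sum_add_distrib]
  refine Finset.sum_congr rfl fun k _ => ?_
  have : F k k = ∑ j, if j = k then F k j else 0 := by simp
  rw [this, ← Finset.sum_add_distrib, ← Finset.sum_add_distrib]
  refine Finset.sum_congr rfl fun j _ => ?_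
  rcases lt_trichotomy j k with h | h | h
  · simp [h, h.ne, h.not_gt]
  · simp [h]
  · simp [h, h.ne', h.not_gt]

lemma sqnorm_add' {n : ℕ} (u v : Fin n → ℝ) :
    sqnorm (u + v) = sqnorm u + 2 * (u ⬝ᵥ v) + sqnorm v := by
  simp only [sqnorm_eq_dot, add_dotProduct, dotProduct_add, dotProduct_comm v u]
  ring

lemma gradk_dot {K M N : ℕ} (A : Fin K → Matrix (Fin M) (Fin N) ℝ)
    (b : Fin M → ℝ) (x : Fin K → Fin N → ℝ) (k : Fin K) (e : Fin N → ℝ) :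
    gradk A b x k ⬝ᵥ e = resid A b x ⬝ᵥ (A k).mulVec e := by
  rw [gradk, Matrix.mulVec_transpose, Matrix.dotProduct_mulVec]

lemma resid_sub {K M N : ℕ} (A : Fin K → Matrix (Fin M) (Fin N) ℝ)
    (b : Fin M → ℝ) (x y : Fin K → Fin N → ℝ) :
    resid A b y = resid A b x + ∑ k, (A k).mulVec (y k - x k) := by
  simp only [resid, Matrix.mulVec_sub, Finset.sum_sub_distrib]
  abel

lemma resid_wpt {K M N : ℕ} (A : Fin K → Matrix (Fin M) (Fin N) ℝ)
    (b : Fin M → ℝ) (x xp : Fin K → Fin N → ℝ) (k : Fin K) :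
    resid A b (wpt x xp k) = resid A b x +
      ∑ j, if j < k then (A j).mulVec (xp j - x j) else 0 := by
  rw [resid_sub A b x]
  congr 1
  refine Finset.sum_congr rfl fun j _ => ?_
  by_cases h : j < k <;> simp [wpt, h]

/-- variational inequality -/
lemma step_vi {K M N : ℕ} (A : Fin K → Matrix (Fin M) (Fin N) ℝ) (b : Fin M → ℝ)
    (X : Fin K → Set (Fin N → ℝ)) (h : Fin K → (Fin N → ℝ) → ℝ)
    (hXcv : ∀ k, Convex ℝ (X k)) (hhcv : ∀ k, ConvexOn ℝ Set.univ (h k))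
    (P : Fin K → ℝ) (x xp : Fin K → Fin N → ℝ) (hs : BCPGStep A b h X P x xp)
    (k : Fin K) (y : Fin N → ℝ) (hy : y ∈ X k) :
    0 ≤ resid A b (wpt x xp k) ⬝ᵥ (A k).mulVec (y - xp k)
      + P k * ((xp k - x k) ⬝ᵥ (y - xp k)) + h k y - h k (xp k) := by
  obtain ⟨hmem, hmin⟩ := hs k
  set E := resid A b (wpt x xp k) ⬝ᵥ (A k).mulVec (y - xp k)
      + P k * ((xp k - x k) ⬝ᵥ (y - xp k)) + h k y - h k (xp k) with hE
  set Q := P k / 2 * sqnorm (y - xp k) with hQ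
  have key : ∀ θ : ℝ, 0 < θ → θ ≤ 1 → 0 ≤ E + θ * Q := by
    intro θ h0 h1
    have hz : (1 - θ) • xp k + θ • y ∈ X k :=
      hXcv k hmem hy (by linarith) h0.le (by ring)
    have hm := hmin _ hz
    have hh := (hhcv k).2 (Set.mem_univ (xp k)) (Set.mem_univ y)
      (by linarith : 0 ≤ 1 - θ) h0.le (by ring)
    have hzz : (1 - θ) • xp k + θ • y - x k = (xp k - x k) + θ • (y - xp k) := by
      ext i; simp; ring
    unfold bcpgObj at hm
    rw [hzz, dotp_eq_dot, dotp_eq_dot, sqnorm_add', sqnorm_smul', dotProduct_add,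
      dotProduct_smul, dotProduct_smul, gradk_dot, gradk_dot] at hm
    simp only [smul_eq_mul] at hm hh
    have : 0 ≤ θ * (E + θ * Q) := by rw [hE, hQ]; linarith
    exact nonneg_of_mul_nonneg_right this h0
  by_contra hneg
  push Not at hneg
  have hQ1 := key 1 one_pos le_rfl
  have hQp : 0 < Q := by linarith
  have hθ0 : 0 < -E / (2 * Q) := by apply div_pos <;> linarith
  have hθ1 : -E / (2 * Q) ≤ 1 := by rw [div_le_one (by linarith)]; linarith
  have := key _ hθ0 hθ1
  have e : -E / (2 * Q) * Q = -E / 2 := by field_simp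
  rw [e] at this
  linarith

lemma step_desc {K M N : ℕ} (A : Fin K → Matrix (Fin M) (Fin N) ℝ) (b : Fin M → ℝ)
    (X : Fin K → Set (Fin N → ℝ)) (h : Fin K → (Fin N → ℝ) → ℝ)
    (hXcv : ∀ k, Convex ℝ (X k)) (hhcv : ∀ k, ConvexOn ℝ Set.univ (h k))
    (P : Fin K → ℝ) (hP : ∀ k, P k = lamMaxQ (A k))
    (x xp : Fin K → Fin N → ℝ) (hx : ∀ k, x k ∈ X k) (hs : BCPGStep A b h X P x xp) :
    ∑ k, P k * sqnorm (xp k - x k) ≤ 2 * (fq A b h x - fq A b h xp) := by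
  set c : Fin K → Fin M → ℝ := fun k => (A k).mulVec (xp k - x k) with hc
  have h1 : ∀ k, P k * sqnorm (xp k - x k) / 2 ≤
      -(resid A b x ⬝ᵥ c k) - (∑ j, if j < k then c k ⬝ᵥ c j else 0)
        - (c k ⬝ᵥ c k) / 2 + h k (x k) - h k (xp k) := by
    intro k
    have := step_vi A b X h hXcv hhcv P x xp hs k (x k) (hx k)
    have e : x k - xp k = -(xp k - x k) := by abel
    have hq := lamMaxQ_le (A k) (xp k - x k)
    rw [← hP, sqnorm_eq_dot ((A k).mulVec _)] at hq
    rw [e, resid_wpt, Matrix.mulVec_neg, dotProduct_neg, dotProduct_neg, add_dotProduct,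
      sum_dotProduct, ← sqnorm_eq_dot] at this
    have e2 : (∑ j, (if j < k then (A j).mulVec (xp j - x j) else 0) ⬝ᵥ
        (A k).mulVec (xp k - x k)) = ∑ j, if j < k then c k ⬝ᵥ c j else 0 := by
      refine Finset.sum_congr rfl fun j _ => ?_
      split_ifs
      · exact dotProduct_comm _ _
      · simp
    rw [e2] at this
    simp only [hc] at *
    linarith
  have h2 := Finset.sum_le_sum fun k (_ : k ∈ Finset.univ) => h1 k
  simp only [Finset.sum_add_distrib, Finset.sum_sub_distrib, Finset.sum_neg_distrib,
    ← Finset.sum_div] at h2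
  have h3 := sum_split_lt fun k j => c k ⬝ᵥ c j
  have h4 : ∑ k, ∑ j, (if k < j then c k ⬝ᵥ c j else 0) =
      ∑ k, ∑ j, (if j < k then c k ⬝ᵥ c j else 0) := by
    rw [Finset.sum_comm]
    refine Finset.sum_congr rfl fun k _ => Finset.sum_congr rfl fun j _ => ?_
    rw [dotProduct_comm]
  have h5 : sqnorm (resid A b xp) = sqnorm (resid A b x) + 2 * ∑ k, resid A b x ⬝ᵥ c k
      + ∑ k, ∑ j, c k ⬝ᵥ c j := by
    rw [resid_sub A b x xp, sqnorm_add', dotProduct_sum, sqnorm_eq_dot (∑ k, _), sum_dotProduct]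
    simp only [dotProduct_sum, hc]
  unfold fq gq
  linarith

lemma step_cost {K M N : ℕ} (A : Fin K → Matrix (Fin M) (Fin N) ℝ) (b : Fin M → ℝ)
    (X : Fin K → Set (Fin N → ℝ)) (h : Fin K → (Fin N → ℝ) → ℝ)
    (hXcv : ∀ k, Convex ℝ (X k)) (hhcv : ∀ k, ConvexOn ℝ Set.univ (h k))
    (P : Fin K → ℝ)
    (x xp : Fin K → Fin N → ℝ) (hs : BCPGStep A b h X P x xp)
    (y : Fin K → Fin N → ℝ) (hy : ∀ k, y k ∈ X k) :
    fq A b h xp - fq A b h y ≤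
      (∑ k, ∑ j, if k < j then (A k).mulVec (xp k - y k) ⬝ᵥ (A j).mulVec (xp j - x j) else 0)
      - ∑ k, (P k * ((xp k - y k) ⬝ᵥ (xp k - x k)) -
        (A k).mulVec (xp k - y k) ⬝ᵥ (A k).mulVec (xp k - x k)) := by
  set c : Fin K → Fin M → ℝ := fun k => (A k).mulVec (xp k - x k) with hc
  set a : Fin K → Fin M → ℝ := fun k => (A k).mulVec (xp k - y k) with ha
  have h1 : ∀ k, h k (xp k) - h k (y k) ≤
      -(resid A b x ⬝ᵥ a k) - (∑ j, if j < k then a k ⬝ᵥ c j else 0)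
        - P k * ((xp k - y k) ⬝ᵥ (xp k - x k)) := by
    intro k
    have := step_vi A b X h hXcv hhcv P x xp hs k (y k) (hy k)
    have e : y k - xp k = -(xp k - y k) := by abel
    rw [e, resid_wpt, Matrix.mulVec_neg, dotProduct_neg, dotProduct_neg, add_dotProduct,
      sum_dotProduct, dotProduct_comm (xp k - x k)] at this
    have e2 : (∑ j, (if j < k then (A j).mulVec (xp j - x j) else 0) ⬝ᵥ
        (A k).mulVec (xp k - y k)) = ∑ j, if j < k then a k ⬝ᵥ c j else 0 := by
      refine Finset.sum_congr rfl fun j _ => ?_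
      split_ifs
      · exact dotProduct_comm _ _
      · simp
    rw [e2] at this
    simp only [ha] at *
    linarith
  have h2 := Finset.sum_le_sum fun k (_ : k ∈ Finset.univ) => h1 k
  simp only [Finset.sum_sub_distrib, Finset.sum_neg_distrib] at h2
  have h3 := sum_split_lt fun k j => a k ⬝ᵥ c j
  have h6 : resid A b xp ⬝ᵥ (∑ k, a k) = ∑ k, resid A b x ⬝ᵥ a k + ∑ k, ∑ j, a k ⬝ᵥ c j := by
    rw [resid_sub A b x xp, add_dotProduct, dotProduct_sum, dotProduct_comm (∑ k, _),
      sum_dotProduct]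
    simp only [dotProduct_sum, hc]
  have h5 : sqnorm (resid A b y) = sqnorm (resid A b xp) - 2 * (resid A b xp ⬝ᵥ ∑ k, a k)
      + sqnorm (∑ k, a k) := by
    have : resid A b y = resid A b xp + -∑ k, a k := by
      rw [resid_sub A b xp y, ← Finset.sum_neg_distrib]
      congr 1
      refine Finset.sum_congr rfl fun k _ => ?_
      rw [ha, ← Matrix.mulVec_neg, neg_sub]
    rw [this, sqnorm_add', dotProduct_neg, sqnorm_eq_dot (-_), neg_dotProduct_neg,
      ← sqnorm_eq_dot]
    ring
  have h7 := sqnorm_nonneg' (∑ k, a k)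
  unfold fq gq
  simp only [Finset.sum_sub_distrib]
  linarith

lemma diag_bound {K M N : ℕ} (A : Fin K → Matrix (Fin M) (Fin N) ℝ)
    (u d : Fin K → Fin N → ℝ) (Lm : ℝ) (hLm : ∀ k, lamMaxQ (A k) ≤ Lm) :
    -∑ k, (lamMaxQ (A k) * (u k ⬝ᵥ d k) - (A k).mulVec (u k) ⬝ᵥ (A k).mulVec (d k)) ≤
      Real.sqrt (Lm * ((∑ k, sqnorm (u k)) * ∑ k, lamMaxQ (A k) * sqnorm (d k))) := by
  apply Real.le_sqrt_of_sq_le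
  rw [neg_sq]
  set B := ∑ k, (lamMaxQ (A k) * (u k ⬝ᵥ d k) - (A k).mulVec (u k) ⬝ᵥ (A k).mulVec (d k)) with hB
  have hq : ∀ s : ℝ, 0 ≤ (Lm * ∑ k, sqnorm (u k)) * (s * s) + (2 * B) * s +
      ∑ k, lamMaxQ (A k) * sqnorm (d k) := by
    intro s
    have h1 : ∀ k, 0 ≤ Lm * sqnorm (u k) * (s * s) + 2 * (lamMaxQ (A k) * (u k ⬝ᵥ d k) -
        (A k).mulVec (u k) ⬝ᵥ (A k).mulVec (d k)) * s + lamMaxQ (A k) * sqnorm (d k) := by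
      intro k
      have := lamMaxQ_le (A k) (s • u k + d k)
      rw [Matrix.mulVec_add, Matrix.mulVec_smul, sqnorm_add', sqnorm_add', sqnorm_smul',
        sqnorm_smul', smul_dotProduct, smul_dotProduct] at this
      simp only [smul_eq_mul] at this
      have e1 := mul_nonneg (mul_nonneg (sub_nonneg.2 (hLm k)) (sqnorm_nonneg' (u k)))
        (mul_self_nonneg s)
      have e2 := mul_nonneg (sq_nonneg s) (sqnorm_nonneg' ((A k).mulVec (u k)))
      have e3 := sqnorm_nonneg' ((A k).mulVec (d k))
      nlinarith
    have h2 := Finset.sum_nonneg fun k (_ : k ∈ Finset.univ) => h1 k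
    simp only [Finset.sum_add_distrib, ← Finset.sum_mul, ← Finset.mul_sum] at h2
    exact h2
  have := discrim_le_zero hq
  unfold discrim at this
  nlinarith

lemma sum_ext {K M N : ℕ} (A : Fin K → Matrix (Fin M) (Fin N) ℝ) (v : Fin K → Fin N → ℝ)
    (S : Finset (Fin K)) :
    sqnorm (∑ k ∈ S, (A k).mulVec (v k)) ≤ lamMaxBlock A * ∑ k ∈ S, sqnorm (v k) := by
  have := block_le A (fun k => if k ∈ S then v k else 0)
  have e1 : ∑ k, (A k).mulVec (if k ∈ S then v k else 0) = ∑ k ∈ S, (A k).mulVec (v k) := by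
    rw [← Finset.sum_filter_add_sum_filter_not Finset.univ (· ∈ S)]
    rw [Finset.sum_congr (s₂ := S) (g := fun k => (A k).mulVec (v k)) (by ext; simp)
      (fun k hk => by simp [hk])]
    rw [Finset.sum_eq_zero (s := Finset.univ.filter (· ∉ S)), add_zero]
    intro k hk
    simp at hk
    simp [hk]
  have e2 : ∑ k, sqnorm (if k ∈ S then v k else 0) = ∑ k ∈ S, sqnorm (v k) := by
    rw [← Finset.sum_filter_add_sum_filter_not Finset.univ (· ∈ S)]
    rw [Finset.sum_congr (s₂ := S) (g := fun k => sqnorm (v k)) (by ext; simp)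
      (fun k hk => by simp [hk])]
    rw [Finset.sum_eq_zero (s := Finset.univ.filter (· ∉ S)), add_zero]
    intro k hk
    simp at hk
    simp [hk, sqnorm]
  rwa [e1, e2] at this

/-- Theorem 1, part 2: cyclic BCPG with stepsizes `P_k = L_k`
satisfies `Δ^{(r+1)} ≤ 3 max{Δ^{(0)}, 2 log²(2NK)(L_max + L²/L_min) R_0²}/(r+1)`. -/
theorem bcpg_rate_aggressive {K M N : ℕ} (hK : 1 ≤ K) (hM : 1 ≤ M) (hN : 1 ≤ N)
    (hNK : 3 ≤ N * K)
    (A : Fin K → Matrix (Fin M) (Fin N) ℝ) (hA : ∀ k, A k ≠ 0) (b : Fin M → ℝ)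
    (X : Fin K → Set (Fin N → ℝ)) (h : Fin K → (Fin N → ℝ) → ℝ)
    (hXne : ∀ k, (X k).Nonempty) (hXcl : ∀ k, IsClosed (X k))
    (hXcv : ∀ k, Convex ℝ (X k))
    (hhcv : ∀ k, ConvexOn ℝ Set.univ (h k))
    (hhlsc : ∀ k, LowerSemicontinuous (h k))
    (P : Fin K → ℝ) (hP : ∀ k, P k = lamMaxQ (A k))
    (x : ℕ → Fin K → Fin N → ℝ) (hx0 : ∀ k, x 0 k ∈ X k)
    (hstep : ∀ r : ℕ, BCPGStep A b h X P (x r) (x (r + 1)))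
    (xstar : Fin K → Fin N → ℝ) (hxstarX : ∀ k, xstar k ∈ X k)
    (hxstar : ∀ y : Fin K → Fin N → ℝ, (∀ k, y k ∈ X k) → fq A b h xstar ≤ fq A b h y)
    (R0 : ℝ)
    (hR0 : ∀ z : Fin K → Fin N → ℝ, (∀ k, z k ∈ X k) → fq A b h z ≤ fq A b h (x 0) →
      ∀ y : Fin K → Fin N → ℝ, (∀ k, y k ∈ X k) →
        (∀ z' : Fin K → Fin N → ℝ, (∀ k, z' k ∈ X k) → fq A b h y ≤ fq A b h z') →
        Real.sqrt (∑ k, sqnorm (z k - y k)) ≤ R0)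
    (r : ℕ) :
    fq A b h (x (r + 1)) - fq A b h xstar ≤
      3 * max (fq A b h (x 0) - fq A b h xstar)
          (2 * Real.log (2 * (N : ℝ) * (K : ℝ)) ^ 2 *
            (maxOf hK (fun k => lamMaxQ (A k)) +
              lamMaxBlock A ^ 2 / minOf hK (fun k => lamMaxQ (A k))) * R0 ^ 2) /
        (r + 1) := by
  have hmono : ∀ r, (∀ k, x r k ∈ X k) := by
    intro r
    cases r with
    | zero => exact hx0
    | succ r => exact fun k => (hstep r k).1
  have hLpos : ∀ k, 0 < lamMaxQ (A k) := fun k => lamMaxQ_pos _ (hA k)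
  set Lm := maxOf hK (fun k => lamMaxQ (A k)) with hLm
  set Ln := minOf hK (fun k => lamMaxQ (A k)) with hLn
  set L := lamMaxBlock A with hL
  have hL0 : 0 ≤ L := lamMaxBlock_nonneg A
  have hLmle : ∀ k, lamMaxQ (A k) ≤ Lm := fun k =>
    Finset.le_sup' (fun k => lamMaxQ (A k)) (Finset.mem_univ k)
  have hLnle : ∀ k, Ln ≤ lamMaxQ (A k) := fun k =>
    Finset.inf'_le (fun k => lamMaxQ (A k)) (Finset.mem_univ k)
  have hLn0 : 0 < Ln := by
    rw [hLn, minOf, Finset.lt_inf'_iff]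
    exact fun k _ => hLpos k
  have hLm0 : 0 < Lm := (hLpos ⟨0, hK⟩).trans_le (hLmle _)
  obtain ⟨p, hKp, hpl⟩ := log_bound hK hN hNK
  set l2 := 2 * Real.log (2 * (N : ℝ) * (K : ℝ)) ^ 2 with hl2
  have hdesc := fun r => step_desc A b X h hXcv hhcv P hP (x r) (x (r + 1)) (hmono r) (hstep r)
  have hDnn : ∀ r, 0 ≤ ∑ k, P k * sqnorm (x (r + 1) k - x r k) := fun r =>
    Finset.sum_nonneg fun k _ => mul_nonneg (by rw [hP]; exact (hLpos k).le) (sqnorm_nonneg' _)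
  have hm : ∀ r, fq A b h (x (r + 1)) ≤ fq A b h (x r) := fun r => by
    have h1 := hdesc r
    have h2 := hDnn r
    linarith
  have hle0 : ∀ r, fq A b h (x r) ≤ fq A b h (x 0) := by
    intro r
    induction r with
    | zero => exact le_rfl
    | succ r ih => exact (hm r).trans ih
  refine recursion (fun r => fq A b h (x r) - fq A b h xstar)
    (max (fq A b h (x 0) - fq A b h xstar) (l2 * (Lm + L ^ 2 / Ln) * R0 ^ 2))
    (fun r => sub_nonneg.2 (hxstar _ (hmono r))) (le_max_left _ _)
    (fun r => by linarith [hm r]) ?_ r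
  intro r
  have hΔ : 0 ≤ fq A b h (x (r + 1)) - fq A b h xstar := sub_nonneg.2 (hxstar _ (hmono _))
  have hd := hdesc r
  have hDn := hDnn r
  have hcost := step_cost A b X h hXcv hhcv P (x r) (x (r + 1)) (hstep r) xstar hxstarX
  have hdiag := diag_bound A (fun k => x (r + 1) k - xstar k) (fun k => x (r + 1) k - x r k) Lm hLmle
  simp only [hP] at hd hDn hcost
  set U := ∑ k, sqnorm (x (r + 1) k - xstar k) with hU
  set D := ∑ k, lamMaxQ (A k) * sqnorm (x (r + 1) k - x r k) with hD
  have hU0 : 0 ≤ U := Finset.sum_nonneg fun k _ => sqnorm_nonneg' _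
  have hUR : U ≤ R0 ^ 2 := by
    have h1 := hR0 (x (r + 1)) (hmono _) (hle0 _) xstar hxstarX hxstar
    have h2 := pow_le_pow_left₀ (Real.sqrt_nonneg _) h1 2
    rwa [Real.sq_sqrt hU0] at h2
  have htr := trunc (fun k => (A k).mulVec (x (r + 1) k - xstar k))
    (fun k => (A k).mulVec (x (r + 1) k - x r k))
    (fun k => sqnorm (x (r + 1) k - xstar k))
    (fun k => lamMaxQ (A k) * sqnorm (x (r + 1) k - x r k))
    (fun k => sqnorm_nonneg' _) (fun k => mul_nonneg (hLpos k).le (sqnorm_nonneg' _))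
    (Real.sqrt L) (Real.sqrt (L / Ln)) (Real.sqrt_nonneg _) (Real.sqrt_nonneg _)
    (fun S => by
      rw [Real.sq_sqrt hL0]
      exact sum_ext A (fun k => x (r + 1) k - xstar k) S)
    (fun S => by
      rw [Real.sq_sqrt (by positivity)]
      refine (sum_ext A (fun k => x (r + 1) k - x r k) S).trans ?_
      rw [div_mul_eq_mul_div, mul_div_assoc]
      refine mul_le_mul_of_nonneg_left ?_ hL0
      rw [le_div_iff₀ hLn0, Finset.sum_mul]
      refine Finset.sum_le_sum fun k _ => ?_
      rw [mul_comm]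
      exact mul_le_mul_of_nonneg_right (hLnle k) (sqnorm_nonneg' _)) p 0
  have hI : Iblk K 0 p = Finset.univ := by
    ext k
    have := k.isLt
    simp only [Iblk, Finset.mem_filter, Finset.mem_univ, true_and, iff_true]
    omega
  rw [hI, ← hU, ← hD] at htr
  set t := 3 / 8 + 3 / 4 * (p : ℝ) with ht
  have ht0 : 0 ≤ t := by positivity
  set γ := Real.sqrt L * Real.sqrt (L / Ln) with hγ
  have hγ2 : γ ^ 2 = L ^ 2 / Ln := by
    rw [hγ, mul_pow, Real.sq_sqrt hL0, Real.sq_sqrt (by positivity)]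
    ring
  have hsq : Real.sqrt (Lm * (U * D)) = Real.sqrt Lm * (Real.sqrt U * Real.sqrt D) := by
    rw [Real.sqrt_mul hLm0.le, Real.sqrt_mul hU0]
  rw [hsq] at hdiag
  have hfin : fq A b h (x (r + 1)) - fq A b h xstar ≤
      (t * γ + Real.sqrt Lm) * (Real.sqrt U * Real.sqrt D) := by
    linarith
  have hfin2 := pow_le_pow_left₀ hΔ hfin 2
  rw [mul_pow, mul_pow, Real.sq_sqrt hU0, Real.sq_sqrt hDn] at hfin2
  have hcs : (t * γ + Real.sqrt Lm) ^ 2 ≤ l2 * (Lm + L ^ 2 / Ln) := by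
    have e1 : (t * γ + Real.sqrt Lm) ^ 2 ≤ (t ^ 2 + 1) * (Real.sqrt Lm ^ 2 + γ ^ 2) := by
      nlinarith [sq_nonneg (t * Real.sqrt Lm - γ)]
    rw [Real.sq_sqrt hLm0.le, hγ2] at e1
    exact e1.trans (mul_le_mul_of_nonneg_right hpl (by positivity))
  have hl20 : 0 ≤ l2 := by positivity
  calc (fq A b h (x (r + 1)) - fq A b h xstar) ^ 2 ≤ _ := hfin2
    _ ≤ (l2 * (Lm + L ^ 2 / Ln)) * (R0 ^ 2 * (2 * (fq A b h (x r) - fq A b h (x (r + 1))))) := by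
      apply mul_le_mul hcs _ (by positivity) (by positivity)
      exact mul_le_mul hUR hd hDn (by positivity)
    _ = 2 * (l2 * (Lm + L ^ 2 / Ln) * R0 ^ 2) * (fq A b h (x r) - fq A b h (x (r + 1))) := by ring
    _ ≤ 2 * (max (fq A b h (x 0) - fq A b h xstar) (l2 * (Lm + L ^ 2 / Ln) * R0 ^ 2)) *
        (fq A b h (x r) - fq A b h (x (r + 1))) := by
      refine mul_le_mul_of_nonneg_right ?_ (sub_nonneg.2 (hm r))
      exact mul_le_mul_of_nonneg_left (le_max_right _ _) (by norm_num)
    _ = _ := by simp only [sub_sub_sub_cancel_right]
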